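/- For every integer k ≥ 2 and every non-negative integer n, the number of partitions of n in which each part is either even but not congruent to 4k−2 modulo 4k, or odd and congruent to 2k−1 or 4k−1 modulo 4k, equals the number of partitions of n in which, whenever an odd part 2j+1 appears, no other part equals any of 2j+1, 2j, 2j−1, ..., 2j−2k+3, and no part equals any of 1, 3, ..., 2k−3. -/

import Mathlib

namespace Andrews

/-- Sum condition valid for the second class. -/
def V2 (k : ℕ) (s : Multiset ℕ) : Prop :=
  0 ∉ s ∧ (∀ b ∈ s, Odd b → ∀ c : ℕ, b + 2 ≤ c + 2 * k → c ≤ b →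
        Multiset.count c s ≤ if c = b then 1 else 0) ∧
      (∀ c ∈ s, Odd c → ¬ (c + 3 ≤ 2 * k))

/-- Even parts arbitrary, odd parts distinct and congruent to `-1` mod `2k`. -/
def V1 (k : ℕ) (s : Multiset ℕ) : Prop :=
  0 ∉ s ∧ ∀ c ∈ s, Odd c → 2 * k ∣ c + 1 ∧ s.count c ≤ 1

/-- The weight of a part. -/
def w (k c : ℕ) : ℕ := if Even c then 1 else k

/-- The weight of a multiset of parts. -/
def wt (k : ℕ) (s : Multiset ℕ) : ℕ := (s.map (w k)).sum

/-- Second class with bounded parts. -/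
def A (k : ℕ) (N n : ℤ) : Set (Multiset ℕ) :=
  {s | V2 k s ∧ 0 ≤ N ∧ (∀ c ∈ s, (c : ℤ) ≤ 2 * N) ∧ (s.sum : ℤ) = n}

/-- Intermediate class with bounded weight. -/
def B (k : ℕ) (N n : ℤ) : Set (Multiset ℕ) :=
  {s | V1 k s ∧ (wt k s : ℤ) ≤ N ∧ (s.sum : ℤ) = n}

/-- Partitions as multisets. -/
def partEquiv (n : ℕ) (P : Multiset ℕ → Prop) :
    {p : Nat.Partition n // P p.parts} ≃ {s : Multiset ℕ | 0 ∉ s ∧ s.sum = n ∧ P s} where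
  toFun p := ⟨p.1.parts, fun h => absurd (p.1.parts_pos h) (lt_irrefl _), p.1.parts_sum, p.2⟩
  invFun s := ⟨⟨s.1, fun {i} hi => Nat.pos_of_ne_zero (fun h => s.2.1 (h ▸ hi)), s.2.2.1⟩, s.2.2.2⟩
  left_inv p := rfl
  right_inv s := rfl

lemma fin_sets (S : Set (Multiset ℕ)) (n : ℤ)
    (h : ∀ s ∈ S, 0 ∉ s ∧ (s.sum : ℤ) = n) : S.Finite := by
  have : Finite {s : Multiset ℕ | 0 ∉ s ∧ s.sum = n.toNat ∧ True} :=
    Finite.of_equiv _ (partEquiv n.toNat (fun _ => True))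
  refine Set.Finite.subset (Set.toFinite {s : Multiset ℕ | 0 ∉ s ∧ s.sum = n.toNat ∧ True}) ?_
  intro s hs
  have := h s hs
  exact ⟨this.1, by omega, trivial⟩

lemma ncard_split (S : Set (Multiset ℕ)) (hS : S.Finite) (Q : Multiset ℕ → Prop) :
    S.ncard = {s | s ∈ S ∧ Q s}.ncard + {s | s ∈ S ∧ ¬ Q s}.ncard := by
  rw [← Set.ncard_union_eq ?_ (hS.subset (fun _ h => h.1)) (hS.subset (fun _ h => h.1))]
  · congr 1
    ext s
    simp only [Set.mem_union, Set.mem_ofPred_eq]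
    tauto
  · rw [Set.disjoint_left]
    rintro s ⟨_, h⟩ ⟨_, h'⟩
    exact h' h

lemma finA (k : ℕ) (N n : ℤ) : (A k N n).Finite :=
  fin_sets _ n (fun s hs => ⟨hs.1.1, hs.2.2.2⟩)

lemma finB (k : ℕ) (N n : ℤ) : (B k N n).Finite :=
  fin_sets _ n (fun s hs => ⟨hs.1.1, hs.2.2⟩)

/-- Adding a given part. -/
lemma ncard_cons (a : ℕ) (S T : Set (Multiset ℕ)) (h : ∀ s, a ::ₘ s ∈ S ↔ s ∈ T)
    (hS : ∀ s ∈ S, a ∈ s) : S.ncard = T.ncard := by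
  symm
  have : S = Set.image (fun s => a ::ₘ s) T := by
    ext s
    constructor
    · intro hs
      obtain ⟨t, rfl⟩ := Multiset.exists_cons_of_mem (hS s hs)
      exact ⟨t, (h t).1 hs, rfl⟩
    · rintro ⟨t, ht, rfl⟩
      exact (h t).2 ht
  rw [this, Set.ncard_image_of_injective]
  intro s t hst
  simpa using hst

lemma recA (k : ℕ) (hk : 2 ≤ k) (N n : ℤ) (hN : 0 ≤ N) :
    (A k (N+1) n).ncard = (A k N n).ncard + (A k (N+1) (n - 2*N-2)).ncard
      + (A k (N+1-k) (n-2*N-1)).ncard := by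
  lift N to ℕ using hN
  rw [ncard_split _ (finA _ _ _) (fun s => 2*N+2 ∈ s),
    ncard_split {s | s ∈ A k (N+1) n ∧ ¬ (2*N+2 ∈ s)}
      ((finA k (N+1) n).subset (fun s h => h.1)) (fun s => 2*N+1 ∈ s)]
  have e1 : {s | s ∈ A k (N+1) n ∧ (2*N+2 ∈ s)}.ncard = (A k (N+1) (n - 2*N-2)).ncard := by
    apply ncard_cons (2*N+2)
    · intro s
      simp only [A, V2, Set.mem_ofPred_eq, Multiset.mem_cons, Multiset.sum_cons, Multiset.count_cons]
      constructor
      · rintro ⟨⟨⟨h1, h2, h3⟩, h4, h5, h6⟩, h7⟩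
        refine ⟨⟨fun h => h1 (Or.inr h), ?_, fun c hc => h3 c (Or.inr hc)⟩, h4,
          fun c hc => h5 c (Or.inr hc), by omega⟩
        intro b hb ho c hc hc'
        have := h2 b (Or.inr hb) ho c hc hc'
        omega
      · rintro ⟨⟨h1, h2, h3⟩, h4, h5, h6⟩
        refine ⟨⟨⟨by simp [h1], ?_, ?_⟩, h4, ?_, by omega⟩, by simp⟩
        · rintro b (rfl | hb) ho c hc hc'
          · exfalso
            rcases ho with ⟨x, hx⟩
            omega
          · have hcc := h2 b hb ho c hc hc'
            have := h5 b hb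
            rcases ho with ⟨x, hx⟩
            rw [if_neg (show ¬ c = 2*N+2 by omega)]
            exact hcc
        · rintro c (rfl | hc) ho
          · exfalso
            rcases ho with ⟨x, hx⟩
            omega
          · exact h3 c hc ho
        · rintro c (rfl | hc)
          · push_cast; omega
          · exact h5 c hc
    · exact fun s h => h.2
  have e2 : {s | s ∈ {s | s ∈ A k (N+1) n ∧ ¬ (2*N+2 ∈ s)} ∧ 2*N+1 ∈ s}.ncard
      = (A k (N+1-k) (n - 2*N-1)).ncard := by
    apply ncard_cons (2*N+1)
    · intro s
      simp only [A, V2, Set.mem_ofPred_eq, Multiset.mem_cons, Multiset.sum_cons, Multiset.count_cons]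
      constructor
      · rintro ⟨⟨⟨⟨h1, h2, h3⟩, h4, h5, h6⟩, h7⟩, h8⟩
        have hNk := h3 (2*N+1) (Or.inl rfl) ⟨N, rfl⟩
        refine ⟨⟨fun h => h1 (Or.inr h), ?_, fun c hc => h3 c (Or.inr hc)⟩, by omega,
          ?_, by omega⟩
        · intro b hb ho c hc hc'
          have := h2 b (Or.inr hb) ho c hc hc'
          omega
        · intro c hc
          by_contra hcon
          have h9 := h5 c (Or.inr hc)
          have h10 : c ≠ 2*N+2 := fun h => h7 (Or.inr (h ▸ hc))
          have := h2 (2*N+1) (Or.inl rfl) ⟨N, rfl⟩ c (by omega) (by omega)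
          have h11 := Multiset.count_pos.2 hc
          omega
      · rintro ⟨⟨h1, h2, h3⟩, h4, h5, h6⟩
        refine ⟨⟨⟨⟨by simp [h1], ?_, ?_⟩, by omega, ?_, by omega⟩, ?_⟩, by simp⟩
        · rintro b (rfl | hb) ho c hc hc'
          · have : Multiset.count c s = 0 := by
              rw [Multiset.count_eq_zero]
              intro hcs
              have := h5 c hcs
              omega
            omega
          · have hcc := h2 b hb ho c hc hc'
            have := h5 b hb
            rw [if_neg (show ¬ c = 2*N+1 by omega)]
            exact hcc
        · rintro c (rfl | hc) ho
          · omega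
          · exact h3 c hc ho
        · rintro c (rfl | hc)
          · push_cast; omega
          · have := h5 c hc
            omega
        · rintro (h | h)
          · omega
          · have := h5 _ h
            push_cast at this
            omega
    · exact fun s h => h.2
  have e3 : {s | s ∈ {s | s ∈ A k (N+1) n ∧ ¬ (2*N+2 ∈ s)} ∧ ¬ 2*N+1 ∈ s} = A k N n := by
    ext s
    simp only [A, Set.mem_ofPred_eq]
    constructor
    · rintro ⟨⟨⟨h1, h4, h5, h6⟩, h7⟩, h8⟩
      refine ⟨h1, by omega, ?_, h6⟩
      intro c hc
      have := h5 c hc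
      have : c ≠ 2*N+2 := fun h => h7 (h ▸ hc)
      have : c ≠ 2*N+1 := fun h => h8 (h ▸ hc)
      omega
    · rintro ⟨h1, h4, h5, h6⟩
      refine ⟨⟨⟨h1, by omega, fun c hc => ?_, h6⟩, fun h => ?_⟩, fun h => ?_⟩
      · have := h5 c hc
        omega
      · have := h5 _ h
        push_cast at this
        omega
      · have := h5 _ h
        push_cast at this
        omega
  rw [e1, e2, e3]
  omega

/-- Exact weight, no part `2k-1`. -/
def Y (k : ℕ) (N n : ℤ) : Set (Multiset ℕ) :=
  {s | V1 k s ∧ (wt k s : ℤ) = N ∧ 2*k-1 ∉ s ∧ (s.sum : ℤ) = n}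

lemma wt_cons (k a : ℕ) (s : Multiset ℕ) : wt k (a ::ₘ s) = w k a + wt k s := by
  simp [wt]

lemma wt_add (k : ℕ) (s t : Multiset ℕ) : wt k (s + t) = wt k s + wt k t := by
  simp [wt]

lemma wt_rep2 (k m : ℕ) : wt k (Multiset.replicate m 2) = m := by
  simp [wt, w]

/-- Shift of a part. -/
def f (k c : ℕ) : ℕ := c + 2 * w k c

/-- Inverse shift. -/
def g (k c : ℕ) : ℕ := c - 2 * w k c

lemma even_f (k c : ℕ) : Even (f k c) ↔ Even c := by
  simp [f, Nat.even_add]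

lemma w_f (k c : ℕ) : w k (f k c) = w k c := by
  simp only [w, even_f]

lemma g_f (k c : ℕ) : g k (f k c) = c := by
  rw [g, w_f, f]; omega

lemma f_inj (k : ℕ) : Function.Injective (f k) := Function.LeftInverse.injective (g_f k)

lemma wt_map_f (k : ℕ) (s : Multiset ℕ) : wt k (s.map (f k)) = wt k s := by
  simp [wt, w_f]

lemma sum_map_f (k : ℕ) (s : Multiset ℕ) : (s.map (f k)).sum = s.sum + 2 * wt k s := by
  induction s using Multiset.induction with
  | empty => simp [wt]
  | cons a s ih => simp only [Multiset.map_cons, Multiset.sum_cons, ih, wt_cons, f]; ring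

lemma cardY (k : ℕ) (hk : 2 ≤ k) (N : ℕ) (n : ℤ) :
    (B k N n).ncard = (Y k N (n + 2 * N)).ncard := by
  have : Y k N (n+2*N) =
      Set.image (fun s => s.map (f k) + Multiset.replicate (N - wt k s) 2) (B k N n) := by
    ext s
    constructor
    · rintro ⟨⟨h1, h2⟩, h3, h4, h5⟩
      have key : ((s.filter (fun c => c ≠ 2)).map (g k)).map (f k) = s.filter (fun c => c ≠ 2) := by
        rw [Multiset.map_map]
        conv_rhs => rw [← Multiset.map_id (s.filter (fun c => c ≠ 2))]
        apply Multiset.map_congr rfl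
        intro c hc
        rw [Multiset.mem_filter] at hc
        obtain ⟨hc, hc2⟩ := hc
        have hc0 : c ≠ 0 := fun h => h1 (h ▸ hc)
        simp only [Function.comp, id]
        by_cases he : Even c
        · have : 2 ≤ c := by
            obtain ⟨x, rfl⟩ := he
            omega
          have h' : g k c = c - 2 := by simp [g, w, he]
          have he' : Even (c - 2) := by
            rw [Nat.even_sub this]; simp [he]
          rw [h']; simp [f, w, he']; omega
        · have ho := Nat.not_even_iff_odd.1 he
          have hd := (h2 c hc ho).1
          have h6 : c ≠ 2*k-1 := fun h => h4 (h ▸ hc)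
          have h7 : 2*k ≤ c := by
            have := Nat.le_of_dvd (by omega) hd
            omega
          have h' : g k c = c - 2*k := by simp [g, w, he]
          have he' : ¬ Even (c - 2*k) := by
            rw [Nat.even_sub h7]; simp [he]
          rw [h']; simp [f, w, he']; omega
      set t := (s.filter (fun c => c ≠ 2)).map (g k) with ht
      have hs : s = t.map (f k) + Multiset.replicate (s.count 2) 2 := by
        rw [key]
        conv_lhs => rw [← Multiset.filter_add_not (fun c => c ≠ 2) s]
        congr 1
        simp only [ne_eq, not_not]
        exact Multiset.filter_eq' s 2
      have hwt : wt k s = wt k t + s.count 2 := by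
        conv_lhs => rw [hs]
        rw [wt_add, wt_map_f, wt_rep2]
      have hsum : s.sum = t.sum + 2 * wt k t + 2 * s.count 2 := by
        conv_lhs => rw [hs]
        rw [Multiset.sum_add, sum_map_f, Multiset.sum_replicate, smul_eq_mul]
        ring
      refine ⟨t, ⟨⟨?_, ?_⟩, by omega, by omega⟩, ?_⟩
      · intro h0
        have : f k 0 ∈ t.map (f k) := Multiset.mem_map_of_mem _ h0
        rw [key, Multiset.mem_filter] at this
        simp [f, w] at this
      · intro c hc ho
        have hm : f k c ∈ s := by
          rw [hs]
          exact Multiset.mem_add.2 (Or.inl (Multiset.mem_map_of_mem _ hc))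
        have hnf : Odd (f k c) := by
          rw [← Nat.not_even_iff_odd, even_f, Nat.not_even_iff_odd]; exact ho
        obtain ⟨ha, hb⟩ := h2 _ hm hnf
        have hfc : f k c = c + 2*k := by
          simp [f, w, Nat.not_even_iff_odd.2 ho]
        constructor
        · rw [hfc, show c + 2*k+1 = (c+1) + 2*k by ring] at ha
          exact (Nat.dvd_add_left (dvd_refl _)).1 ha
        · refine le_trans ?_ hb
          conv_rhs => rw [hs]
          rw [Multiset.count_add, Multiset.count_map_eq_count' _ _ (f_inj k)]
          omega
      · simp only
        rw [show N - wt k t = s.count 2 by omega]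
        exact hs.symm
    · rintro ⟨t, ⟨⟨h1, h2⟩, h3, h4⟩, rfl⟩
      refine ⟨⟨?_, ?_⟩, ?_, ?_, ?_⟩
      · simp only [Multiset.mem_add, Multiset.mem_map, not_or]
        constructor
        · rintro ⟨c, hc, h⟩
          have : c = 0 := by simp only [f] at h; omega
          exact h1 (this ▸ hc)
        · intro h
          have := Multiset.eq_of_mem_replicate h
          omega
      · intro c hc ho
        rw [Multiset.mem_add] at hc
        have hc2 : c ≠ 2 := by rintro rfl; exact absurd ho (by decide)
        rcases hc with hc | hc
        · rw [Multiset.mem_map] at hc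
          obtain ⟨d, hd, rfl⟩ := hc
          have ho' : Odd d := by
            rw [← Nat.not_even_iff_odd, even_f, Nat.not_even_iff_odd] at ho; exact ho
          obtain ⟨ha, hb⟩ := h2 d hd ho'
          have hfc : f k d = d + 2*k := by
            simp [f, w, Nat.not_even_iff_odd.2 ho']
          constructor
          · rw [hfc, show d + 2*k+1 = (d+1) + 2*k by ring]
            exact (Nat.dvd_add_left (dvd_refl _)).2 ha
          · rw [Multiset.count_add, Multiset.count_map_eq_count' _ _ (f_inj k),
              Multiset.count_replicate, if_neg hc2.symm]
            exact hb
        · exact absurd (Multiset.eq_of_mem_replicate hc) hc2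
      · simp only
        rw [wt_add, wt_map_f, wt_rep2]
        omega
      · simp only [Multiset.mem_add, Multiset.mem_map, not_or]
        constructor
        · rintro ⟨c, hc, h⟩
          by_cases he : Even c
          · have := (even_f k c).2 he
            rw [h] at this
            obtain ⟨x, hx⟩ := this
            omega
          · simp [f, w, he] at h
            omega
        · intro h
          have := Multiset.eq_of_mem_replicate h
          omega
      · simp only
        rw [Multiset.sum_add, sum_map_f, Multiset.sum_replicate, smul_eq_mul]
        omega
  rw [this, Set.InjOn.ncard_image]
  intro s hs t ht hst
  have inv : ∀ s ∈ B k N n, (((s.map (f k) + Multiset.replicate (N - wt k s) 2).map (g k)).filter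
      (fun c => c ≠ 0)) = s := by
    intro s hs
    rw [Multiset.map_add, Multiset.filter_add, Multiset.map_map]
    have : (g k ∘ f k) = id := by
      funext c; exact g_f k c
    rw [this, Multiset.map_id, Multiset.map_replicate, show g k 2 = 0 by simp [g, w]]
    have hself : s.filter (fun c => c ≠ 0) = s :=
      Multiset.filter_eq_self.2 (fun c hc (h : c = 0) => hs.1.1 (h ▸ hc))
    rw [hself, Multiset.filter_eq_nil.2]
    · simp
    · intro c hc
      simpa using Multiset.eq_of_mem_replicate hc
  rw [← inv s hs, ← inv t ht]
  simp only at hst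
  rw [hst]

lemma recB (k : ℕ) (hk : 2 ≤ k) (N n : ℤ) (hN : 0 ≤ N) :
    (B k (N+1) n).ncard = (B k N n).ncard + (B k (N+1) (n - 2*N-2)).ncard
      + (B k (N+1-k) (n-2*N-1)).ncard := by
  lift N to ℕ using hN
  rw [ncard_split _ (finB _ _ _) (fun s => wt k s ≤ N),
    ncard_split {s | s ∈ B k (N+1) n ∧ ¬ (wt k s ≤ N)}
      ((finB k (N+1) n).subset (fun s h => h.1)) (fun s => 2*k-1 ∈ s)]
  have e1 : {s | s ∈ B k (N+1) n ∧ (wt k s ≤ N)} = B k N n := by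
    ext s
    simp only [B, Set.mem_ofPred_eq]
    constructor
    · rintro ⟨⟨h1, h2, h3⟩, h4⟩
      exact ⟨h1, by omega, h3⟩
    · rintro ⟨h1, h2, h3⟩
      exact ⟨⟨h1, by omega, h3⟩, by omega⟩
  have e2 : {s | s ∈ {s | s ∈ B k (N+1) n ∧ ¬ (wt k s ≤ N)} ∧ ¬ 2*k-1 ∈ s}.ncard
      = (B k (N+1) (n-2*N-2)).ncard := by
    have := cardY k hk (N+1) (n-2*N-2)
    push_cast at this
    rw [this]
    congr 1
    ext s
    simp only [B, Y, Set.mem_ofPred_eq]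
    constructor
    · rintro ⟨⟨⟨h1, h2, h3⟩, h4⟩, h5⟩
      exact ⟨h1, by omega, h5, by omega⟩
    · rintro ⟨h1, h2, h3, h4⟩
      exact ⟨⟨⟨h1, by omega, by omega⟩, by omega⟩, h3⟩
  have hko : Odd (2*k-1) := ⟨k-1, by omega⟩
  have hwk : w k (2*k-1) = k := by simp [w, Nat.not_even_iff_odd.2 hko]
  have e3 : {s | s ∈ {s | s ∈ B k (N+1) n ∧ ¬ (wt k s ≤ N)} ∧ 2*k-1 ∈ s}.ncard
      = (B k (N+1-k) (n-2*N-1)).ncard := by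
    have e4 : {s | s ∈ {s | s ∈ B k (N+1) n ∧ ¬ (wt k s ≤ N)} ∧ 2*k-1 ∈ s}.ncard
        = (Y k (N+1-k) (n-2*N-1 + 2*(N+1-k))).ncard := by
      apply ncard_cons (2*k-1)
      · intro s
        simp only [B, Y, V1, Set.mem_ofPred_eq, Multiset.mem_cons, Multiset.sum_cons,
          Multiset.count_cons, wt_cons, hwk]
        constructor
        · rintro ⟨⟨⟨⟨h1, h2⟩, h3, h4⟩, h5⟩, h6⟩
          refine ⟨⟨fun h => h1 (Or.inr h), fun c hc ho => ?_⟩, by omega, ?_, by omega⟩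
          · have := h2 c (Or.inr hc) ho
            exact ⟨this.1, by omega⟩
          · intro h
            have := (h2 _ (Or.inl rfl) hko).2
            have h11 := Multiset.count_pos.2 h
            rw [if_pos rfl] at this
            omega
        · rintro ⟨⟨h1, h2⟩, h3, h4, h5⟩
          refine ⟨⟨⟨⟨?_, ?_⟩, by omega, by omega⟩, by omega⟩, by simp⟩
          · rintro (h | h)
            · omega
            · exact h1 h
          · rintro c (rfl | hc) ho
            · refine ⟨by rw [show 2*k-1+1 = 2*k by omega], ?_⟩
              rw [Multiset.count_eq_zero.2 h4]; simp
            · rw [if_neg (fun h : c = 2*k-1 => h4 (h ▸ hc))]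
              exact h2 c hc ho
      · exact fun s h => h.2
    rw [e4]
    by_cases h : k ≤ N+1
    · obtain ⟨M, hM⟩ := Nat.exists_eq_add_of_le h
      have hM' : (N:ℤ)+1-k = M := by omega
      rw [hM', cardY k hk]
    · have : Y k (N+1-k) (n-2*N-1 + 2*(N+1-k)) = B k (N+1-k) (n-2*N-1) := by
        ext s
        simp only [B, Y, Set.mem_ofPred_eq]
        constructor <;> rintro ⟨_, h, _⟩ <;> omega
      rw [this]
  rw [e1, e2, e3]
  omega

lemma A_eq_B (k : ℕ) (hk : 2 ≤ k) (m : ℕ) : ∀ N n : ℤ, N + n < m →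
    (A k N n).ncard = (B k N n).ncard := by
  induction m with
  | zero =>
    intro N n h
    congr 1
    ext s
    simp only [A, B, Set.mem_ofPred_eq]
    constructor
    · rintro ⟨_, _, _, _⟩
      omega
    · rintro ⟨_, _, _⟩
      omega
  | succ m ih =>
    intro N n h
    rcases lt_trichotomy N 0 with hN | rfl | hN
    · congr 1
      ext s
      simp only [A, B, Set.mem_ofPred_eq]
      constructor
      · rintro ⟨_, _, _, _⟩
        omega
      · rintro ⟨_, _, _⟩
        omega
    · congr 1
      ext s
      simp only [A, B, Set.mem_ofPred_eq]
      rcases Multiset.empty_or_exists_mem s with rfl | ⟨a, ha⟩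
      · simp [V1, V2, wt]
      · constructor
        · rintro ⟨h1, _, h2, _⟩
          have := h2 a ha
          have : a = 0 := by omega
          exact absurd (this ▸ ha) h1.1
        · rintro ⟨h1, h2, _⟩
          obtain ⟨t, rfl⟩ := Multiset.exists_cons_of_mem ha
          rw [wt_cons] at h2
          have : 0 < w k a := by unfold w; split_ifs <;> omega
          omega
    · obtain ⟨M, rfl⟩ : ∃ M, N = M + 1 := ⟨N-1, by ring⟩
      rw [recA k hk M n (by omega), recB k hk M n (by omega), ih _ _ (by omega),
        ih _ _ (by omega), ih _ _ (by omega)]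

lemma w_le (k : ℕ) (hk : 2 ≤ k) (s : Multiset ℕ) (h : 0 ∉ s) : wt k s ≤ k * s.sum := by
  induction s using Multiset.induction with
  | empty => simp [wt]
  | cons a s ih =>
    rw [Multiset.mem_cons, not_or] at h
    rw [wt_cons, Multiset.sum_cons, mul_add]
    have := ih h.2
    have h1 : w k a ≤ k := by unfold w; split_ifs <;> omega
    have h2 : k * 1 ≤ k * a := Nat.mul_le_mul_left k (by omega)
    omega

lemma card_V2_V1 (k : ℕ) (hk : 2 ≤ k) (n : ℕ) :
    {s | V2 k s ∧ s.sum = n}.ncard = {s | V1 k s ∧ s.sum = n}.ncard := by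
  have h := A_eq_B k hk (k*n+n+1) (k*n) n (by push_cast; omega)
  convert h using 2
  · ext s
    simp only [A, Set.mem_ofPred_eq]
    constructor
    · rintro ⟨h1, h2⟩
      refine ⟨h1, by positivity, fun c hc => ?_, by omega⟩
      have h3 := Multiset.le_sum_of_mem hc
      have h4 : 1 * n ≤ k * n := Nat.mul_le_mul_right n (by omega)
      zify at h3 h4 h2
      linarith
    · rintro ⟨h1, _, _, h2⟩
      exact ⟨h1, by omega⟩
  · ext s
    simp only [B, Set.mem_ofPred_eq]
    constructor
    · rintro ⟨h1, h2⟩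
      refine ⟨h1, ?_, by omega⟩
      have := w_le k hk s h1.1
      rw [h2] at this
      exact_mod_cast this
    · rintro ⟨h1, _, h2⟩
      exact ⟨h1, by omega⟩

/-- First class. -/
def V0 (k : ℕ) (s : Multiset ℕ) : Prop :=
  0 ∉ s ∧ ∀ c ∈ s, (Even c ∧ ¬ 4 * k ∣ c + 2) ∨ (Odd c ∧ 2 * k ∣ c + 1)

open Classical in
/-- Splitting the parts congruent to `-2` mod `4k`. -/
noncomputable def phi (k : ℕ) (s : Multiset ℕ) : Multiset ℕ :=
  s.bind (fun c => if 4 * k ∣ c + 2 then {c/2, c/2} else {c})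

lemma G_even {k c : ℕ} (h : 4 * k ∣ c + 2) : ∃ d, c = 2 * d ∧ Odd d ∧ 2 * k ∣ d + 1 := by
  obtain ⟨x, hx⟩ := h
  have h2 : 4 * k * x = 2 * (2 * (k * x)) := by ring
  refine ⟨2*(k*x) - 1, by omega, ⟨k*x-1, by omega⟩, ⟨x, ?_⟩⟩
  have : 2 * k * x = 2 * (k*x) := by ring
  omega

lemma G_iff {k d : ℕ} : 4 * k ∣ 2 * d + 2 ↔ 2 * k ∣ d + 1 := by
  rw [show 4 * k = 2 * (2 * k) by ring, show 2*d+2 = 2*(d+1) by ring]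
  exact Nat.mul_dvd_mul_iff_left (by norm_num)

lemma phi_cons_pos (k d : ℕ) (s : Multiset ℕ) (h : 2 * k ∣ d + 1) :
    phi k (2*d ::ₘ s) = d ::ₘ d ::ₘ phi k s := by
  rw [phi, Multiset.cons_bind, if_pos (G_iff.2 h), Nat.mul_div_cancel_left _ (by norm_num)]
  simp [phi, Multiset.insert_eq_cons]

lemma phi_cons_neg (k c : ℕ) (s : Multiset ℕ) (h : ¬ 4 * k ∣ c + 2) :
    phi k (c ::ₘ s) = c ::ₘ phi k s := by
  rw [phi, Multiset.cons_bind, if_neg h]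
  rfl

lemma phi_sum (k : ℕ) (s : Multiset ℕ) : (phi k s).sum = s.sum := by
  induction s using Multiset.induction with
  | empty => simp [phi]
  | cons a s ih =>
    by_cases h : 4 * k ∣ a + 2
    · obtain ⟨d, rfl, _, hd⟩ := G_even h
      rw [phi_cons_pos _ _ _ hd]
      simp only [Multiset.sum_cons, ih]; ring
    · rw [phi_cons_neg _ _ _ h]
      simp only [Multiset.sum_cons, ih]

lemma phi_count_pos (k c : ℕ) (s : Multiset ℕ) (ho : Odd c) (h : 2 * k ∣ c + 1) :
    (phi k s).count c = s.count c + 2 * s.count (2*c) := by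
  have hc : c ≠ 0 := by rintro rfl; simp at ho
  induction s using Multiset.induction with
  | empty => simp [phi]
  | cons a s ih =>
    by_cases h : 4 * k ∣ a + 2
    · obtain ⟨d, rfl, _, hd⟩ := G_even h
      rw [phi_cons_pos _ _ _ hd]
      have : c ≠ 2 * d := by rintro rfl; exact absurd ho (by simp)
      simp only [Multiset.count_cons, ih, if_neg this]
      by_cases hcd : c = d
      · subst hcd; simp; ring
      · rw [if_neg hcd, if_neg (by omega)]; ring
    · rw [phi_cons_neg _ _ _ h]
      have : 2 * c ≠ a := by rintro rfl; exact h (G_iff.2 ‹_›)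
      simp only [Multiset.count_cons, ih, if_neg this]
      ring

lemma phi_count_neg (k c : ℕ) (s : Multiset ℕ) (he : Even c) (hn : ¬ 4 * k ∣ c + 2) :
    (phi k s).count c = s.count c := by
  induction s using Multiset.induction with
  | empty => simp [phi]
  | cons a s ih =>
    by_cases h : 4 * k ∣ a + 2
    · obtain ⟨d, rfl, hod, hd⟩ := G_even h
      rw [phi_cons_pos _ _ _ hd]
      have h1 : c ≠ 2 * d := by rintro rfl; exact hn h
      have h2 : c ≠ d := by rintro rfl; exact absurd he (Nat.not_even_iff_odd.2 hod)
      simp only [Multiset.count_cons, ih, if_neg h1, if_neg h2]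
    · rw [phi_cons_neg _ _ _ h]
      simp only [Multiset.count_cons, ih]

lemma V1_count (k : ℕ) (s : Multiset ℕ) (h : V1 k s) (c : ℕ) (ho : Odd c) : s.count c ≤ 1 := by
  by_cases hc : c ∈ s
  · exact (h.2 c hc ho).2
  · rw [Multiset.count_eq_zero.2 hc]; omega

lemma phi_inj (k : ℕ) (s t : Multiset ℕ) (hs : V1 k s) (ht : V1 k t) (h : phi k s = phi k t) :
    s = t := by
  have key : ∀ c, Odd c → 2 * k ∣ c + 1 → s.count c = t.count c ∧
      s.count (2*c) = t.count (2*c) := by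
    intro c ho hd
    have h1 := phi_count_pos k c s ho hd
    have h2 := phi_count_pos k c t ho hd
    have h3 := V1_count k s hs c ho
    have h4 := V1_count k t ht c ho
    rw [h] at h1
    omega
  ext c
  rcases Nat.even_or_odd c with he | ho
  · by_cases hG : 4 * k ∣ c + 2
    · obtain ⟨d, rfl, hod, hd⟩ := G_even hG
      exact (key d hod hd).2
    · rw [← phi_count_neg k c s he hG, ← phi_count_neg k c t he hG, h]
  · by_cases hd : 2 * k ∣ c + 1
    · exact (key c ho hd).1
    · rw [Multiset.count_eq_zero.2 (fun hc => hd (hs.2 c hc ho).1),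
        Multiset.count_eq_zero.2 (fun hc => hd (ht.2 c hc ho).1)]

lemma phi_V0 (k : ℕ) (s : Multiset ℕ) (hs : V1 k s) : V0 k (phi k s) := by
  have key : ∀ c ∈ phi k s, c ≠ 0 ∧
      ((Even c ∧ ¬ 4 * k ∣ c + 2) ∨ (Odd c ∧ 2 * k ∣ c + 1)) := by
    intro c hc
    rw [phi, Multiset.mem_bind] at hc
    obtain ⟨a, ha, hc⟩ := hc
    split_ifs at hc with h
    · obtain ⟨d, rfl, hod, hd⟩ := G_even h
      rw [Nat.mul_div_cancel_left _ (by norm_num)] at hc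
      have : c = d := by simpa using hc
      subst this
      exact ⟨by rintro rfl; simp at hod, Or.inr ⟨hod, hd⟩⟩
    · have : c = a := by simpa using hc
      subst this
      refine ⟨fun h => hs.1 (h ▸ ha), ?_⟩
      rcases Nat.even_or_odd c with he | ho
      · exact Or.inl ⟨he, h⟩
      · exact Or.inr ⟨ho, (hs.2 c ha ho).1⟩
  exact ⟨fun h => (key 0 h).1 rfl, fun c hc => (key c hc).2⟩

lemma phi_id (k : ℕ) (s : Multiset ℕ) (h : ∀ c ∈ s, ¬ 4 * k ∣ c + 2) : phi k s = s := by
  induction s using Multiset.induction with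
  | empty => simp [phi]
  | cons a s ih =>
    rw [phi_cons_neg _ _ _ (h a (by simp)), ih (fun c hc => h c (by simp [hc]))]

lemma phi_surj (k : ℕ) (m : ℕ) : ∀ t : Multiset ℕ, t.card ≤ m → V0 k t →
    ∃ s, V1 k s ∧ phi k s = t := by
  induction m with
  | zero =>
    intro t ht _
    have : t = 0 := Multiset.card_eq_zero.1 (by omega)
    subst this
    exact ⟨0, ⟨by simp, by simp⟩, by simp [phi]⟩
  | succ m ih =>
    intro t ht hV
    by_cases hex : ∃ c ∈ t, Odd c ∧ 2 ≤ t.count c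
    · obtain ⟨c, hc, ho, h2⟩ := hex
      obtain ⟨t1, rfl⟩ := Multiset.exists_cons_of_mem hc
      rw [Multiset.count_cons_self] at h2
      have hc1 : c ∈ t1 := Multiset.count_pos.1 (by omega)
      obtain ⟨t2, rfl⟩ := Multiset.exists_cons_of_mem hc1
      have hd : 2 * k ∣ c + 1 := by
        rcases hV.2 c hc with h | h
        · exact absurd h.1 (Nat.not_even_iff_odd.2 ho)
        · exact h.2
      obtain ⟨s, hs, hst⟩ := ih t2 (by simp at ht; omega)
        ⟨fun h => hV.1 (by simp [h]), fun d hd => hV.2 d (by simp [hd])⟩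
      refine ⟨2*c ::ₘ s, ⟨?_, ?_⟩, by rw [phi_cons_pos _ _ _ hd, hst]⟩
      · rw [Multiset.mem_cons, not_or]
        refine ⟨?_, hs.1⟩
        obtain ⟨x, hx⟩ := ho
        omega
      · intro d hd hod
        have hne : d ≠ 2 * c := by rintro rfl; exact absurd hod (by simp)
        rw [Multiset.mem_cons] at hd
        rw [Multiset.count_cons, if_neg hne]
        exact hs.2 d (hd.resolve_left hne) hod
    · push Not at hex
      refine ⟨t, ⟨hV.1, fun c hc ho => ⟨?_, by have := hex c hc ho; omega⟩⟩, phi_id k t ?_⟩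
      · rcases hV.2 c hc with h | h
        · exact absurd h.1 (Nat.not_even_iff_odd.2 ho)
        · exact h.2
      · intro c hc hG
        rcases hV.2 c hc with h | h
        · exact h.2 hG
        · obtain ⟨d, rfl, _⟩ := G_even hG
          exact absurd h.1 (by simp)

lemma card_V0_V1 (k : ℕ) (n : ℕ) :
    {s | V0 k s ∧ s.sum = n}.ncard = {s | V1 k s ∧ s.sum = n}.ncard := by
  have : {s | V0 k s ∧ s.sum = n} = Set.image (phi k) {s | V1 k s ∧ s.sum = n} := by
    ext t
    constructor
    · rintro ⟨h1, h2⟩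
      obtain ⟨s, hs, rfl⟩ := phi_surj k _ t le_rfl h1
      exact ⟨s, ⟨hs, by rw [← h2, phi_sum]⟩, rfl⟩
    · rintro ⟨s, ⟨h1, h2⟩, rfl⟩
      exact ⟨phi_V0 k s h1, by rw [phi_sum, h2]⟩
  rw [this, Set.InjOn.ncard_image]
  intro s hs t ht h
  exact phi_inj k s t hs.1 ht.1 h

lemma mod_iff (m r c : ℕ) (hr : 0 < r) (hm : r ≤ m) : c % m = m - r ↔ m ∣ c + r := by
  have hlt : c % m < m := Nat.mod_lt _ (by omega)
  have hdm := Nat.div_add_mod c m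
  constructor
  · intro h
    refine ⟨c / m + 1, ?_⟩
    rw [mul_add]; omega
  · intro h
    have h1 : m ∣ c % m + r := by
      have : c + r = m * (c / m) + (c % m + r) := by omega
      rw [this] at h
      exact (Nat.dvd_add_right (dvd_mul_right _ _)).1 h
    obtain ⟨x, hx⟩ := h1
    have : x = 1 := by
      have hx0 : 0 < x := by
        rcases Nat.eq_zero_or_pos x with rfl | h
        · simp at hx; omega
        · exact h
      have : x < 2 := by
        by_contra hcon
        have : m * 2 ≤ m * x := Nat.mul_le_mul_left m (by omega)
        omega
      omega
    subst this
    omega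

lemma odd_iff (k c : ℕ) (hk : 2 ≤ k) :
    (c % (4 * k) = 2 * k - 1 ∨ c % (4 * k) = 4 * k - 1) ↔ 2 * k ∣ c + 1 := by
  rw [← mod_iff (2*k) 1 c (by omega) (by omega)]
  have h1 : c % (4*k) % (2*k) = c % (2*k) := Nat.mod_mod_of_dvd c ⟨2, by ring⟩
  have h2 : c % (4*k) < 4*k := Nat.mod_lt _ (by omega)
  rw [← h1]
  generalize c % (4*k) = x at *
  by_cases hx : x < 2*k
  · rw [Nat.mod_eq_of_lt hx]; omega
  · rw [Nat.mod_eq_sub_mod (by omega), Nat.mod_eq_of_lt (by omega)]; omega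

end Andrews

/-- Andrews's family of partition identities (Theorem 3 of
"A new generalization of Schur's second partition theorem").
For `k ≥ 2`, partitions of `n` whose parts are even and `≢ 4k−2 (mod 4k)`,
or odd and `≡ 2k−1` or `4k−1 (mod 4k)`, are equinumerous with partitions of `n`
in which an odd part `b = 2j+1` forbids any other part in `{2j−2k+3, …, 2j, 2j+1}`
and no part equals any of `1, 3, …, 2k−3`. -/
theorem andrews_identity (k : ℕ) (hk : 2 ≤ k) (n : ℕ) :
    Nat.card {p : Nat.Partition n //
      ∀ c ∈ p.parts, (Even c ∧ c % (4 * k) ≠ 4 * k - 2) ∨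
        (Odd c ∧ (c % (4 * k) = 2 * k - 1 ∨ c % (4 * k) = 4 * k - 1))} =
    Nat.card {p : Nat.Partition n //
      (∀ b ∈ p.parts, Odd b → ∀ c : ℕ, b + 2 ≤ c + 2 * k → c ≤ b →
        Multiset.count c p.parts ≤ if c = b then 1 else 0) ∧
      (∀ c ∈ p.parts, Odd c → ¬ (c + 3 ≤ 2 * k))} := by
  have h1 := Nat.card_congr (Andrews.partEquiv n (fun s => ∀ c ∈ s,
    (Even c ∧ c % (4 * k) ≠ 4 * k - 2) ∨
        (Odd c ∧ (c % (4 * k) = 2 * k - 1 ∨ c % (4 * k) = 4 * k - 1))))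
  have h2 := Nat.card_congr (Andrews.partEquiv n (fun s =>
    (∀ b ∈ s, Odd b → ∀ c : ℕ, b + 2 ≤ c + 2 * k → c ≤ b →
        Multiset.count c s ≤ if c = b then 1 else 0) ∧
      (∀ c ∈ s, Odd c → ¬ (c + 3 ≤ 2 * k))))
  rw [h1, h2, Nat.card_coe_set_eq, Nat.card_coe_set_eq]
  have h3 := (Andrews.card_V0_V1 k n).trans (Andrews.card_V2_V1 k hk n).symm
  convert h3 using 2
  · ext s
    simp only [Set.mem_ofPred_eq, Andrews.V0, Andrews.odd_iff k _ hk, ne_eq,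
      Andrews.mod_iff (4*k) 2 _ (by norm_num) (by omega : 2 ≤ 4 * k)]
    tauto
  · ext s
    simp only [Set.mem_ofPred_eq, Andrews.V2]
    tauto
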